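/- Let P : (1,2] → ℝ be differentiable with P′(s) = P(s)² − 2e^{P(s)²} for all s ∈ (1,2] and P(2) = 1. Then P(s) > 1/(s−1) for every s ∈ (1,2); consequently P(s) → +∞ as s → 1⁺, and there exists no differentiable function P : [1,2] → ℝ satisfying P′(s) = P(s)² − 2e^{P(s)²} on [1,2] together with P(2) = 1. -/

import Mathlib

open Set Filter

/-!
The bound `x² − 2e^{x²} < −x²` makes every solution strictly decreasing on `(1,2]`, so `P ≥ P 2 = 1`
there and `1/P` is well defined. Its derivative `−P′/P²` exceeds `1`, so `1/P(s) − s` is strictly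
increasing with value `−1` at `s = 2`. Hence `1/P(s) < s − 1` for `s < 2`, which is the comparison
with `1/(s−1)`. Blow-up at `1⁺` follows, and it contradicts the continuity at `1` of a solution
on `[1,2]`.
-/

lemma riccati_rhs_lt (x : ℝ) : x ^ 2 - 2 * Real.exp (x ^ 2) < -x ^ 2 := by
  have := Real.add_one_le_exp (x ^ 2)
  linarith

lemma riccati_lower_bound (P : ℝ → ℝ)
    (hode : ∀ s ∈ Ioc (1 : ℝ) 2,
      HasDerivWithinAt P (P s ^ 2 - 2 * Real.exp (P s ^ 2)) (Ioc (1 : ℝ) 2) s)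
    (hterm : P 2 = 1) :
    ∀ s ∈ Ioo (1 : ℝ) 2, 1 / (s - 1) < P s := by
  have hd : ∀ s ∈ Ioo (1 : ℝ) 2, HasDerivAt P (P s ^ 2 - 2 * Real.exp (P s ^ 2)) s :=
    fun s hs => (hode s (Ioo_subset_Ioc_self hs)).hasDerivAt (Ioc_mem_nhds hs.1 hs.2)
  have hc : ContinuousOn P (Ioc 1 2) := fun s hs => (hode s hs).continuousWithinAt
  have h2 : (2 : ℝ) ∈ Ioc (1 : ℝ) 2 := by norm_num
  have hanti : StrictAntiOn P (Ioc 1 2) := by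
    refine strictAntiOn_of_deriv_neg (convex_Ioc 1 2) hc fun s hs => ?_
    rw [interior_Ioc] at hs
    rw [(hd s hs).deriv]
    have := riccati_rhs_lt (P s)
    nlinarith [sq_nonneg (P s)]
  have hpos : ∀ s ∈ Ioc (1 : ℝ) 2, 0 < P s := fun s hs => by
    have := hanti.antitoneOn hs h2 hs.2
    linarith
  have hmono : StrictMonoOn (fun s => (P s)⁻¹ - s) (Ioc 1 2) := by
    refine strictMonoOn_of_deriv_pos (convex_Ioc 1 2)
      ((hc.inv₀ fun s hs => (hpos s hs).ne').sub continuousOn_id) fun s hs => ?_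
    rw [interior_Ioc] at hs
    have hp := hpos s (Ioo_subset_Ioc_self hs)
    have hder := ((hd s hs).fun_inv hp.ne').fun_sub (hasDerivAt_id' s)
    rw [hder.deriv, sub_pos, lt_div_iff₀ (by positivity)]
    linarith [riccati_rhs_lt (P s)]
  intro s hs
  have hp := hpos s (Ioo_subset_Ioc_self hs)
  have h := hmono (Ioo_subset_Ioc_self hs) h2 hs.2
  simp only [hterm, inv_one] at h
  rw [one_div]
  exact inv_lt_of_inv_lt₀ hp (by linarith)

lemma riccati_tendsto (P : ℝ → ℝ)
    (hlb : ∀ s ∈ Ioo (1 : ℝ) 2, 1 / (s - 1) < P s) :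
    Tendsto P (nhdsWithin 1 (Ioi (1 : ℝ))) atTop := by
  have h0 : Tendsto (fun s : ℝ => s - 1) (nhdsWithin 1 (Ioi 1)) (nhdsWithin 0 (Ioi 0)) := by
    refine tendsto_nhdsWithin_iff.2 ⟨?_, ?_⟩
    · have : Tendsto (fun s : ℝ => s - 1) (nhds 1) (nhds (1 - 1)) :=
        (continuous_id.sub continuous_const).tendsto 1
      rw [sub_self] at this
      exact this.mono_left nhdsWithin_le_nhds
    · filter_upwards [self_mem_nhdsWithin] with s hs
      exact sub_pos.2 (mem_Ioi.1 hs)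
  refine tendsto_atTop_mono' _ ?_ (tendsto_inv_nhdsGT_zero.comp h0)
  filter_upwards [Ioo_mem_nhdsGT (show (1 : ℝ) < 2 by norm_num)] with s hs
  simpa using (hlb s hs).le

/-- **Example 1.1.** Any solution of `P′ = P² − 2·e^{P²}` on `(1,2]` with `P(2) = 1`
stays strictly above the comparison solution `1/(s−1)`, hence blows up as `s → 1⁺`;
consequently no solution exists on all of `[1,2]`. -/
theorem riccati_blowup_example
    (P : ℝ → ℝ)
    (hode : ∀ s ∈ Ioc (1 : ℝ) 2,
      HasDerivWithinAt P (P s ^ 2 - 2 * Real.exp (P s ^ 2)) (Ioc (1 : ℝ) 2) s)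
    (hterm : P 2 = 1) :
    (∀ s ∈ Ioo (1 : ℝ) 2, 1 / (s - 1) < P s) ∧
    Tendsto P (nhdsWithin 1 (Ioi (1 : ℝ))) atTop ∧
    ¬ ∃ Pg : ℝ → ℝ,
        (∀ s ∈ Icc (1 : ℝ) 2,
          HasDerivWithinAt Pg (Pg s ^ 2 - 2 * Real.exp (Pg s ^ 2)) (Icc (1 : ℝ) 2) s) ∧
        Pg 2 = 1 := by
  have hlb := riccati_lower_bound P hode hterm
  refine ⟨hlb, riccati_tendsto P hlb, ?_⟩
  rintro ⟨Q, hQ, hQ2⟩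
  have hQtop := riccati_tendsto Q (riccati_lower_bound Q
    (fun s hs => (hQ s (Ioc_subset_Icc_self hs)).mono Ioc_subset_Icc_self) hQ2)
  have hQ1 := (hQ 1 (by norm_num)).continuousWithinAt.mono Ioc_subset_Icc_self
  rw [ContinuousWithinAt, nhdsWithin_Ioc_eq_nhdsGT (by norm_num)] at hQ1
  exact not_tendsto_nhds_of_tendsto_atTop hQtop _ hQ1
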